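/- Let H be a hierarchical clustering method satisfying the Agnostic Axiom of Value (A1''') and the Axiom of Transformation (A2). Then for every network (X, A_X), writing u_X = H(X, A_X), for all pairs of nodes x, x' ∈ X it holds that u^U_X(x,x') ≤ u_X(x,x') ≤ u^R_X(x,x'), where u^U_X and u^R_X denote the unilateral and reciprocal ultrametrics. -/

import Mathlib

noncomputable section

/-- A dissimilarity function on a node set: nonnegative and zero exactly on the diagonal.
It need not be symmetric nor satisfy the triangle inequality. -/
def IsDissim {X : Type} (A : X → X → ℝ) : Prop :=
  (∀ x x', 0 ≤ A x x') ∧ (∀ x x', A x x' = 0 ↔ x = x')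

/-- A symmetric dissimilarity. -/
def IsSym {X : Type} (A : X → X → ℝ) : Prop := ∀ x x', A x x' = A x' x

/-- An ultrametric: nonnegative, zero exactly on the diagonal, symmetric, and
satisfying the strong triangle inequality. -/
def IsUltrametric {X : Type} (u : X → X → ℝ) : Prop :=
  (∀ x x', 0 ≤ u x x') ∧ (∀ x x', u x x' = 0 ↔ x = x') ∧
    (∀ x x', u x x' = u x' x) ∧
    (∀ x x' x'', u x x'' ≤ max (u x x') (u x' x''))

/-- The cost of the chain `x :: l`: the maximum dissimilarity over consecutive links. -/
def chainCost {X : Type} (A : X → X → ℝ) : X → List X → ℝ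
  | _, [] => 0
  | x, y :: l => max (A x y) (chainCost A y l)

/-- The set of costs of chains from `x` to `x'`. -/
def chainCosts {X : Type} (A : X → X → ℝ) (x x' : X) : Set ℝ :=
  {c | ∃ l : List X, (x :: l).getLast (List.cons_ne_nil x l) = x' ∧ chainCost A x l = c}

/-- The directed minimum chain cost `ũ*_X(x,x')`: minimum cost over all chains from `x` to `x'`. -/
def minChainCost {X : Type} (A : X → X → ℝ) (x x' : X) : ℝ :=
  sInf (chainCosts A x x')

/-- The nonreciprocal ultrametric `u^NR`. -/
def nonrecipUltra {X : Type} (A : X → X → ℝ) (x x' : X) : ℝ :=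
  max (minChainCost A x x') (minChainCost A x' x)

/-- The reciprocal ultrametric `u^R`. -/
def recipUltra {X : Type} (A : X → X → ℝ) (x x' : X) : ℝ :=
  minChainCost (fun a b => max (A a b) (A b a)) x x'

/-- The unilateral ultrametric `u^U`. -/
def uniUltra {X : Type} (A : X → X → ℝ) (x x' : X) : ℝ :=
  minChainCost (fun a b => min (A a b) (A b a)) x x'

/-- The minimum loop cost `mlc(X, A_X)`: minimum cost over loops, i.e. chains from some
node `x` back to itself containing at least one node different from `x`. -/
def mlc {X : Type} (A : X → X → ℝ) : ℝ :=
  sInf {c | ∃ (x : X) (l : List X),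
    (x :: l).getLast (List.cons_ne_nil x l) = x ∧ (∃ y ∈ l, y ≠ x) ∧ chainCost A x l = c}

/-- The separation `sep(X, A_X)`: minimum dissimilarity over pairs of distinct nodes. -/
def sep {X : Type} (A : X → X → ℝ) : ℝ :=
  sInf {c | ∃ x x' : X, x ≠ x' ∧ A x x' = c}

/-- A hierarchical clustering method: assigns to every (finite) network an output
two-variable function on the same node set. -/
abbrev HCMethod := ∀ (X : Type) [Fintype X], (X → X → ℝ) → X → X → ℝ

/-- A hierarchical clustering method outputs an ultrametric on every network. -/
def IsHCMethod (H : HCMethod) : Prop :=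
  ∀ (X : Type) [Fintype X] (A : X → X → ℝ), IsDissim A → IsUltrametric (H X A)

/-- `p, q` are the two (distinct) nodes of a two-node set. -/
def TwoNode {X : Type} (p q : X) : Prop := p ≠ q ∧ ∀ x : X, x = p ∨ x = q

/-- Axiom of Value (A1): on every two-node network the output clusters the two nodes at
the maximum of the two dissimilarities. -/
def AxiomValue (H : HCMethod) : Prop :=
  ∀ (X : Type) [Fintype X] (p q : X), TwoNode p q →
    ∀ A : X → X → ℝ, IsDissim A → H X A p q = max (A p q) (A q p)

/-- Axiom of Transformation (A2): dissimilarity-reducing maps do not increase output values. -/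
def AxiomTransform (H : HCMethod) : Prop :=
  ∀ (X Y : Type) [Fintype X] [Fintype Y] (AX : X → X → ℝ) (AY : Y → Y → ℝ),
    IsDissim AX → IsDissim AY →
    ∀ φ : X → Y, (∀ x x', AY (φ x) (φ x') ≤ AX x x') →
    ∀ x x' : X, H Y AY (φ x) (φ x') ≤ H X AX x x'

/-- The canonical dissimilarity `A_{n,α,β}` on `Fin n`: `α` for `i > j`, `β` for `i < j`,
`0` on the diagonal. -/
def canonDissim (n : ℕ) (α β : ℝ) : Fin n → Fin n → ℝ :=
  fun i j => if i = j then 0 else if j < i then α else β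

/-- Extended Axiom of Value (A1'): on every permuted canonical network `Δ_n(α,β,Π)` the
output ultrametric equals `max(α,β)` off the diagonal. -/
def ExtAxiomValue (H : HCMethod) : Prop :=
  ∀ (n : ℕ) (α β : ℝ), 0 < α → 0 < β → ∀ π : Equiv.Perm (Fin n),
    ∀ i j : Fin n, i ≠ j →
      H (Fin n) (fun i j => canonDissim n α β (π i) (π j)) i j = max α β

/-- Alternative Axiom of Value (A1''): on every two-node network the output clusters the
two nodes at the minimum of the two dissimilarities. -/
def AltAxiomValue (H : HCMethod) : Prop :=
  ∀ (X : Type) [Fintype X] (p q : X), TwoNode p q →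
    ∀ A : X → X → ℝ, IsDissim A → H X A p q = min (A p q) (A q p)

/-- Agnostic Axiom of Value (A1'''): on every two-node network the output value lies
between the minimum and maximum of the two dissimilarities. -/
def AgnAxiomValue (H : HCMethod) : Prop :=
  ∀ (X : Type) [Fintype X] (p q : X), TwoNode p q →
    ∀ A : X → X → ℝ, IsDissim A →
      min (A p q) (A q p) ≤ H X A p q ∧ H X A p q ≤ max (A p q) (A q p)

/-!
Upper bound: the two-node network with dissimilarities `A a b` and `A b a` maps onto `{a, b}`, so
`u a b ≤ max (A a b) (A b a)` for every link, and the strong triangle inequality propagates this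
along chains.

Lower bound: let `δ > 0` be the unilateral value of `(x, x')`. The nodes at unilateral value less
than `δ` from `x'` form a set containing `x'` but not `x`, and no link in either direction between
this set and its complement is shorter than `δ`. Collapsing the set and its complement to two
nodes at dissimilarity `δ` is therefore dissimilarity reducing.
-/

section Chains

variable {X : Type} {B : X → X → ℝ}

lemma chainCost_nonneg (x : X) (l : List X) : 0 ≤ chainCost B x l := by
  cases l with
  | nil => exact le_rfl
  | cons y l => exact le_max_of_le_right (chainCost_nonneg y l)

lemma chainCosts_nonempty (x z : X) : (chainCosts B x z).Nonempty :=
  ⟨_, [z], rfl, rfl⟩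

lemma bddBelow_chainCosts (x z : X) : BddBelow (chainCosts B x z) := by
  refine ⟨0, ?_⟩
  rintro _ ⟨l, -, rfl⟩
  exact chainCost_nonneg x l

lemma zero_mem_chainCosts_self (x : X) : 0 ∈ chainCosts B x x :=
  ⟨[], rfl, rfl⟩

lemma max_mem_chainCosts {x y z : X} {c : ℝ} (hc : c ∈ chainCosts B y z) :
    max (B x y) c ∈ chainCosts B x z := by
  obtain ⟨l, hl, rfl⟩ := hc
  exact ⟨y :: l, by rwa [List.getLast_cons (List.cons_ne_nil y l)], rfl⟩

lemma minChainCost_self_nonpos (x : X) : minChainCost B x x ≤ 0 :=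
  csInf_le (bddBelow_chainCosts x x) (zero_mem_chainCosts_self x)

lemma minChainCost_le_max (x y z : X) :
    minChainCost B x z ≤ max (B x y) (minChainCost B y z) := by
  refine le_of_forall_gt fun c hc => ?_
  obtain ⟨hlink, hchain⟩ := max_lt_iff.1 hc
  obtain ⟨d, hd, hdc⟩ := exists_lt_of_csInf_lt (chainCosts_nonempty y z) hchain
  calc minChainCost B x z
      ≤ max (B x y) d := csInf_le (bddBelow_chainCosts x z) (max_mem_chainCosts hd)
    _ < c := max_lt hlink hdc

lemma le_chainCost {u : X → X → ℝ} (hself : ∀ x, u x x ≤ 0)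
    (htri : ∀ x y z, u x z ≤ max (u x y) (u y z)) (hlink : ∀ x y, u x y ≤ B x y)
    (x : X) (l : List X) :
    u x ((x :: l).getLast (List.cons_ne_nil x l)) ≤ chainCost B x l := by
  induction l generalizing x with
  | nil => exact hself x
  | cons y l ih =>
    rw [List.getLast_cons (List.cons_ne_nil y l)]
    exact (htri x y _).trans (max_le_max (hlink x y) (ih y))

lemma le_minChainCost {u : X → X → ℝ} (hself : ∀ x, u x x ≤ 0)
    (htri : ∀ x y z, u x z ≤ max (u x y) (u y z)) (hlink : ∀ x y, u x y ≤ B x y) (x z : X) :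
    u x z ≤ minChainCost B x z := by
  refine le_csInf (chainCosts_nonempty x z) ?_
  rintro _ ⟨l, rfl, rfl⟩
  exact le_chainCost hself htri hlink x l

end Chains

section Dissimilarities

lemma IsDissim.apply_self {X : Type} {A : X → X → ℝ} (hA : IsDissim A) (a : X) : A a a = 0 :=
  (hA.2 a a).2 rfl

lemma IsDissim.pos {X : Type} {A : X → X → ℝ} (hA : IsDissim A) {a b : X} (hab : a ≠ b) :
    0 < A a b :=
  (hA.1 a b).lt_of_ne' (mt (hA.2 a b).1 hab)

lemma isDissim_canonDissim (n : ℕ) {α β : ℝ} (hα : 0 < α) (hβ : 0 < β) :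
    IsDissim (canonDissim n α β) := by
  constructor <;> intro i j <;> unfold canonDissim <;> split_ifs <;>
    simp [*, hα.le, hβ.le, hα.ne', hβ.ne']

lemma twoNode_zero_one : TwoNode (0 : Fin 2) 1 :=
  ⟨by decide, by decide⟩

end Dissimilarities

section AgnosticMethods

variable {H : HCMethod} {X : Type} [Fintype X] {A : X → X → ℝ}

lemma AgnAxiomValue.canonDissim_two_bounds (hvalue : AgnAxiomValue H) {α β : ℝ}
    (hα : 0 < α) (hβ : 0 < β) :
    min α β ≤ H (Fin 2) (canonDissim 2 α β) 0 1 ∧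
      H (Fin 2) (canonDissim 2 α β) 0 1 ≤ max α β := by
  simpa [canonDissim, min_comm, max_comm] using
    hvalue (Fin 2) 0 1 twoNode_zero_one _ (isDissim_canonDissim 2 hα hβ)

lemma AgnAxiomValue.le_max (hvalue : AgnAxiomValue H) (htransform : AxiomTransform H)
    (hA : IsDissim A) {a b : X} (hab : a ≠ b) : H X A a b ≤ max (A a b) (A b a) := by
  have hba_pos := hA.pos hab.symm
  have hab_pos := hA.pos hab
  have hreduce : ∀ i j, A (![a, b] i) (![a, b] j) ≤ canonDissim 2 (A b a) (A a b) i j := by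
    simp [Fin.forall_fin_two, canonDissim, hA.apply_self]
  calc H X A a b
      ≤ H (Fin 2) (canonDissim 2 (A b a) (A a b)) 0 1 :=
        htransform _ _ _ _ (isDissim_canonDissim 2 hba_pos hab_pos) hA ![a, b] hreduce 0 1
    _ ≤ max (A b a) (A a b) := (hvalue.canonDissim_two_bounds hba_pos hab_pos).2
    _ = max (A a b) (A b a) := max_comm _ _

lemma AgnAxiomValue.le_recipUltra (hvalue : AgnAxiomValue H) (htransform : AxiomTransform H)
    (hA : IsDissim A) (hself : ∀ x, H X A x x ≤ 0)
    (htri : ∀ x y z, H X A x z ≤ max (H X A x y) (H X A y z)) (x x' : X) :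
    H X A x x' ≤ recipUltra A x x' := by
  refine le_minChainCost hself htri (fun a b => ?_) x x'
  obtain rfl | hab := eq_or_ne a b
  · exact (hself a).trans (le_max_of_le_left (hA.1 a a))
  · exact hvalue.le_max htransform hA hab

lemma AgnAxiomValue.le_of_separated (hvalue : AgnAxiomValue H) (htransform : AxiomTransform H)
    (hA : IsDissim A) {δ : ℝ} (hδ : 0 < δ) {S : Set X}
    (hS : ∀ w ∉ S, ∀ z ∈ S, δ ≤ min (A w z) (A z w)) {x x' : X} (hx : x ∉ S) (hx' : x' ∈ S) :
    δ ≤ H X A x x' := by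
  classical
  let collapse : X → Fin 2 := fun z => if z ∈ S then 1 else 0
  have hreduce : ∀ w z, canonDissim 2 δ δ (collapse w) (collapse z) ≤ A w z := by
    intro w z
    by_cases hw : w ∈ S <;> by_cases hz : z ∈ S
    · simpa [collapse, canonDissim, hw, hz] using hA.1 w z
    · simpa [collapse, canonDissim, hw, hz] using (le_min_iff.1 (hS z hz w hw)).2
    · simpa [collapse, canonDissim, hw, hz] using (le_min_iff.1 (hS w hw z hz)).1
    · simpa [collapse, canonDissim, hw, hz] using hA.1 w z
  calc δ = min δ δ := (min_self δ).symm
    _ ≤ H (Fin 2) (canonDissim 2 δ δ) 0 1 := (hvalue.canonDissim_two_bounds hδ hδ).1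
    _ = H (Fin 2) (canonDissim 2 δ δ) (collapse x) (collapse x') := by simp [collapse, hx, hx']
    _ ≤ H X A x x' := htransform _ _ _ _ hA (isDissim_canonDissim 2 hδ hδ) collapse hreduce x x'

lemma AgnAxiomValue.uniUltra_le (hvalue : AgnAxiomValue H) (htransform : AxiomTransform H)
    (hA : IsDissim A) {x x' : X} (hnonneg : 0 ≤ H X A x x') :
    uniUltra A x x' ≤ H X A x x' := by
  obtain hδ | hδ := le_or_gt (uniUltra A x x') 0
  · exact hδ.trans hnonneg
  · refine hvalue.le_of_separated htransform hA hδ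
      (S := {z | uniUltra A z x' < uniUltra A x x'}) ?_ (lt_irrefl (uniUltra A x x'))
      ((minChainCost_self_nonpos x').trans_lt hδ)
    intro w hw z hz
    have hchain : uniUltra A w x' ≤ max (min (A w z) (A z w)) (uniUltra A z x') :=
      minChainCost_le_max w z x'
    exact (le_max_iff.1 ((not_lt.1 hw).trans hchain)).resolve_right (not_le.2 hz)

end AgnosticMethods

/-- Any method satisfying the Agnostic Axiom of Value (A1''') and (A2) lies
between unilateral and reciprocal clustering. -/
theorem agnostic_extremal_ultrametrics
    (H : HCMethod) (hH : IsHCMethod H) (hA1''' : AgnAxiomValue H) (hA2 : AxiomTransform H)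
    (X : Type) [Fintype X] (A : X → X → ℝ) (hA : IsDissim A) (x x' : X) :
    uniUltra A x x' ≤ H X A x x' ∧ H X A x x' ≤ recipUltra A x x' := by
  obtain ⟨hnonneg, hzero, -, htri⟩ := hH X A hA
  exact ⟨hA1'''.uniUltra_le hA2 hA (hnonneg x x'),
    hA1'''.le_recipUltra hA2 hA (fun y => ((hzero y y).2 rfl).le) htri x x'⟩
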